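/- arXiv:2002.12155 — 15 statements merged into one kernel-verified Lean document; each statement's English description precedes it below -/
import Mathlib

section
/- Let j and k be positive integers such that j and j+k have the same set of prime divisors, and let g = gcd(j, j+k). If Hypothesis P(j/g, (j+k)/g) holds, then Hypothesis S_k holds, i.e. the equation φ(n) = φ(n+k) has infinitely many solutions n. -/
/-- Euler's totient is `Nat.totient`.  Hypothesis `P(a,b)`: there are infinitely many
positive integers `n` with `a*n+1` and `b*n+1` both prime.  Hypothesis `S_k`:
`φ(n) = φ(n+k)` has infinitely many solutions in positive integers `n`. -/
theorem stmt_0 (j k : ℕ) (hj : 0 < j) (hk : 0 < k)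
    (hpf : j.primeFactors = (j + k).primeFactors)
    (hP : {n : ℕ | 0 < n ∧ (j / Nat.gcd j (j + k) * n + 1).Prime ∧
        ((j + k) / Nat.gcd j (j + k) * n + 1).Prime}.Infinite) :
    {n : ℕ | 0 < n ∧ Nat.totient n = Nat.totient (n + k)}.Infinite := by
  have hg : 0 < Nat.gcd j (j + k) := Nat.gcd_pos_of_pos_left _ hj
  have ha : Nat.gcd j (j + k) * (j / Nat.gcd j (j + k)) = j :=
    Nat.mul_div_cancel' (Nat.gcd_dvd_left _ _)
  have hb : Nat.gcd j (j + k) * ((j + k) / Nat.gcd j (j + k)) = j + k :=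
    Nat.mul_div_cancel' (Nat.gcd_dvd_right _ _)
  generalize Nat.gcd j (j + k) = g at *
  generalize j / g = a at *
  generalize (j + k) / g = b at *
  have ha0 : 0 < a := by
    rcases Nat.eq_zero_or_pos a with h | h
    · subst h; omega
    · exact h
  have hb0 : 0 < b := by
    rcases Nat.eq_zero_or_pos b with h | h
    · subst h; omega
    · exact h
  have h1 := Nat.totient_mul_prod_primeFactors j
  have h2 := Nat.totient_mul_prod_primeFactors (j + k)
  rw [← hpf] at h2
  have hpos : 0 < ∏ p ∈ j.primeFactors, p :=
    Finset.prod_pos fun p hp => (Nat.prime_of_mem_primeFactors hp).pos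
  generalize ∏ p ∈ j.primeFactors, p = P at *
  generalize ∏ p ∈ j.primeFactors, (p - 1) = Q at *
  have key : Nat.totient j * b = Nat.totient (j + k) * a := by
    apply Nat.eq_of_mul_eq_mul_left (Nat.mul_pos hpos hg)
    calc P * g * (Nat.totient j * b) = (Nat.totient j * P) * (g * b) := by ring
      _ = (Nat.totient (j + k) * P) * (g * a) := by rw [h1, h2, ha, hb]; ring
      _ = _ := by ring
  have hinf := hP.diff (Set.finite_Iic (j + k))
  have hinj : Function.Injective (fun r : ℕ => j * (b * r + 1)) := by
    intro x y h
    have h3 := Nat.eq_of_mul_eq_mul_left hj h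
    exact Nat.eq_of_mul_eq_mul_left hb0 (Nat.add_right_cancel h3)
  refine (hinf.image hinj.injOn).mono ?_
  rintro _ ⟨r, ⟨⟨hr, hp, hq⟩, hlt⟩, rfl⟩
  simp only [Set.mem_Iic, not_le] at hlt
  have hp' : j + k < a * r + 1 := by nlinarith
  have hq' : j + k < b * r + 1 := by nlinarith
  have e : j * (b * r + 1) + k = (j + k) * (a * r + 1) := by
    calc j * (b * r + 1) + k = j * b * r + (j + k) := by ring
      _ = (g * a) * b * r + (j + k) := by rw [ha]
      _ = (g * b) * a * r + (j + k) := by ring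
      _ = _ := by rw [hb]; ring
  refine ⟨by positivity, ?_⟩
  show Nat.totient (j * (b * r + 1)) = Nat.totient (j * (b * r + 1) + k)
  have c1 : Nat.Coprime j (b * r + 1) :=
    ((Nat.Prime.coprime_iff_not_dvd hq).2 (Nat.not_dvd_of_pos_of_lt hj (by omega))).symm
  have c2 : Nat.Coprime (j + k) (a * r + 1) :=
    ((Nat.Prime.coprime_iff_not_dvd hp).2 (Nat.not_dvd_of_pos_of_lt (by omega) hp')).symm
  rw [e, Nat.totient_mul c1, Nat.totient_mul c2, Nat.totient_prime hp, Nat.totient_prime hq,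
    Nat.add_sub_cancel, Nat.add_sub_cancel, ← mul_assoc, ← mul_assoc, key]
end

section
/- Let j, k, r be positive integers such that j and j+k have the same set of prime divisors, and let g = gcd(j, j+k). Suppose p = (j/g)·r + 1 and q = ((j+k)/g)·r + 1 are both prime, p does not divide j+k, and q does not divide j. Then n = j·q satisfies φ(n) = φ(n+k). -/
/-- If `j` and `j+k` have the same prime factors, `g = gcd(j, j+k)`,
`p = (j/g)·r + 1` and `q = ((j+k)/g)·r + 1` are both prime with `p ∤ j+k` and
`q ∤ j`, then `n = j·q` satisfies `φ(n) = φ(n+k)`. -/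
theorem stmt_1 (j k r : ℕ) (hj : 0 < j) (hk : 0 < k) (hr : 0 < r)
    (hpf : j.primeFactors = (j + k).primeFactors)
    (p q : ℕ)
    (hpdef : p = j / Nat.gcd j (j + k) * r + 1)
    (hqdef : q = (j + k) / Nat.gcd j (j + k) * r + 1)
    (hp : p.Prime) (hq : q.Prime)
    (hpnd : ¬ p ∣ (j + k)) (hqnd : ¬ q ∣ j) :
    Nat.totient (j * q) = Nat.totient (j * q + k) := by
  have hg : 0 < Nat.gcd j (j + k) := Nat.gcd_pos_of_pos_left _ hj
  have ha := Nat.mul_div_cancel' (Nat.gcd_dvd_left j (j + k))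
  have hb := Nat.mul_div_cancel' (Nat.gcd_dvd_right j (j + k))
  generalize j / Nat.gcd j (j + k) = a at *
  generalize (j + k) / Nat.gcd j (j + k) = b at *
  generalize Nat.gcd j (j + k) = g at *
  have key : j * q + k = (j + k) * p := by
    have : j * b = (j + k) * a := by
      rw [← hb, ← ha]; ring
    rw [hpdef, hqdef]
    linear_combination r * this
  have h1 := Nat.totient_mul_prod_primeFactors j
  have h2 := Nat.totient_mul_prod_primeFactors (j + k)
  rw [← hpf] at h2
  have hP : 0 < ∏ x ∈ j.primeFactors, x :=
    Finset.prod_pos fun x hx => (Nat.prime_of_mem_primeFactors hx).pos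
  have h3 : j.totient * (j + k) = (j + k).totient * j := by
    apply Nat.eq_of_mul_eq_mul_right hP
    linear_combination (j + k) * h1 - j * h2
  have h4 : j.totient * b = (j + k).totient * a := by
    apply Nat.eq_of_mul_eq_mul_left hg
    linear_combination h3 + j.totient * hb - (j + k).totient * ha
  rw [key, Nat.totient_mul ((hq.coprime_iff_not_dvd.2 hqnd).symm),
    Nat.totient_mul ((hp.coprime_iff_not_dvd.2 hpnd).symm),
    Nat.totient_prime hp, Nat.totient_prime hq, hpdef, hqdef,
    Nat.add_sub_cancel, Nat.add_sub_cancel, ← mul_assoc, ← mul_assoc, h4]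
end

section
/- Let a < b be positive integers and assume Hypothesis P(a,b). Then Hypothesis S_k holds for every positive integer k that is a multiple of κ(a,b); that is, for every positive integer ℓ, the equation φ(n) = φ(n + ℓ·κ(a,b)) has infinitely many solutions n. -/
/-- For positive integers `a < b`, with `a' = a/gcd(a,b)`, `b' = b/gcd(a,b)`,
`κ(a,b) = (b' - a') · ∏_{p | a'b'} p`. -/
def kappa (a b : ℕ) : ℕ :=
  (b / Nat.gcd a b - a / Nat.gcd a b) *
    ∏ p ∈ ((a / Nat.gcd a b) * (b / Nat.gcd a b)).primeFactors, p

lemma totient_mul_aux (m c : ℕ) (hm : m ≠ 0) (hc : c ≠ 0) (h : c.primeFactors ⊆ m.primeFactors) :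
    Nat.totient (m * c) = c * Nat.totient m := by
  have h1 := Nat.totient_mul_prod_primeFactors (m * c)
  have h2 := Nat.totient_mul_prod_primeFactors m
  rw [Nat.primeFactors_mul hm hc, Finset.union_eq_left.mpr h] at h1
  have hpos : 0 < ∏ p ∈ m.primeFactors, p :=
    Finset.prod_pos fun p hp => (Nat.prime_of_mem_primeFactors hp).pos
  apply Nat.eq_of_mul_eq_mul_right hpos
  rw [h1, mul_assoc c, h2]
  ring

lemma totient_prime_aux (m c x : ℕ) (hm : m ≠ 0) (hc : c ≠ 0)
    (h : c.primeFactors ⊆ m.primeFactors) (hx : (x + 1).Prime) (hlt : m * c < x + 1) :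
    Nat.totient (m * c * (x + 1)) = c * Nat.totient m * x := by
  have hco : Nat.Coprime (m * c) (x + 1) :=
    ((Nat.Prime.coprime_iff_not_dvd hx).mpr
      (Nat.not_dvd_of_pos_of_lt (by positivity) hlt)).symm
  rw [Nat.totient_mul hco, totient_mul_aux m c hm hc h, Nat.totient_prime hx]
  simp

/-- If `P(a,b)` holds (infinitely many `n` with `a*n+1`, `b*n+1` both prime), then
`S_k` holds for every positive multiple `k = ℓ·κ(a,b)` of `κ(a,b)`. -/
theorem stmt_2 (a b : ℕ) (ha : 0 < a) (hab : a < b)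
    (hP : {n : ℕ | 0 < n ∧ (a * n + 1).Prime ∧ (b * n + 1).Prime}.Infinite) :
    ∀ ℓ : ℕ, 0 < ℓ →
      {n : ℕ | 0 < n ∧ Nat.totient n = Nat.totient (n + ℓ * kappa a b)}.Infinite := by
  intro ℓ hℓ
  unfold kappa
  obtain ⟨a', b', ha', hb'⟩ : ∃ a' b', a / Nat.gcd a b = a' ∧ b / Nat.gcd a b = b' := ⟨_, _, rfl, rfl⟩
  rw [ha', hb']
  have hg : 0 < Nat.gcd a b := Nat.gcd_pos_of_pos_left _ ha
  have hga : a = Nat.gcd a b * a' := by rw [← ha', Nat.mul_div_cancel' (Nat.gcd_dvd_left a b)]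
  have hgb : b = Nat.gcd a b * b' := by rw [← hb', Nat.mul_div_cancel' (Nat.gcd_dvd_right a b)]
  generalize Nat.gcd a b = g at hg hga hgb
  clear ha' hb'
  have hlt : a' < b' := by
    rw [hga, hgb] at hab
    exact lt_of_mul_lt_mul_left hab (Nat.zero_le _)
  have ha0 : a' ≠ 0 := by rintro rfl; simp at hga; omega
  have hb0 : b' ≠ 0 := by omega
  obtain ⟨r, hr⟩ : ∃ r, r = ∏ p ∈ (a' * b').primeFactors, p := ⟨_, rfl⟩
  rw [← hr]
  have hr0 : r ≠ 0 := by
    rw [hr]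
    exact (Finset.prod_pos fun p hp => (Nat.prime_of_mem_primeFactors hp).pos).ne'
  have hm : ℓ * r ≠ 0 := by positivity
  have hsub : (a' * b').primeFactors ⊆ (ℓ * r).primeFactors := by
    intro p hp
    exact Nat.mem_primeFactors.mpr ⟨Nat.prime_of_mem_primeFactors hp,
      Dvd.dvd.mul_left (hr ▸ Finset.dvd_prod_of_mem (fun p => p) hp) _, hm⟩
  rw [Nat.primeFactors_mul ha0 hb0] at hsub
  have hsa := Finset.subset_union_left.trans hsub
  have hsb := Finset.subset_union_right.trans hsub
  have hinf := hP.sdiff (Set.finite_Iic (ℓ * r * b'))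
  have hinj : Function.Injective (fun n => ℓ * r * a' * (b * n + 1)) := by
    intro x y hxy
    have h1 := Nat.eq_of_mul_eq_mul_left (by positivity) hxy
    exact Nat.eq_of_mul_eq_mul_left (by omega : 0 < b) (by omega)
  refine (hinf.image hinj.injOn).mono ?_
  rintro _ ⟨n, ⟨⟨hn, hp, hq⟩, hbig⟩, rfl⟩
  simp only [Set.mem_Iic, not_le] at hbig
  refine ⟨by positivity, ?_⟩
  have hsum : ℓ * r * a' * (b * n + 1) + ℓ * ((b' - a') * r) = ℓ * r * b' * (a * n + 1) := by
    obtain ⟨d, rfl⟩ := Nat.exists_eq_add_of_lt hlt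
    rw [show a' + d + 1 - a' = d + 1 by omega, hga, hgb]
    ring
  have h1 : n ≤ a * n := Nat.le_mul_of_pos_left _ ha
  have h2 : n ≤ b * n := Nat.le_mul_of_pos_left _ (by omega)
  have h3 : ℓ * r * a' ≤ ℓ * r * b' := Nat.mul_le_mul_left _ hlt.le
  simp only []
  rw [hsum, totient_prime_aux _ _ _ hm ha0 hsa hq (by omega),
    totient_prime_aux _ _ _ hm hb0 hsb hp (by omega), hga, hgb]
  ring
end

section
/- Let a < b be positive integers, a' = a/gcd(a,b), b' = b/gcd(a,b), and let s = ∏_{p | a'b'} p be the product of the distinct primes dividing a'b'. Let ℓ and r be positive integers such that p = a'r+1 and q = b'r+1 are both prime, p does not divide b'·ℓ·s, and q does not divide a'·ℓ·s. Then the numbers m₁ = b'·ℓ·s·(a'r+1) and m₂ = a'·ℓ·s·(b'r+1) satisfy φ(m₁) = φ(m₂) and m₁ − m₂ = ℓ·κ(a,b). -/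
lemma totient_aux (t : ℕ) : ∀ x : ℕ, x ≠ 0 → (∀ p : ℕ, p.Prime → p ∣ x → p ∣ t) →
    Nat.totient (x * t) = x * Nat.totient t := by
  intro x
  induction x using induction_on_primes with
  | zero => intro h; exact absurd rfl h
  | one => intros; simp
  | prime_mul p x hp ih =>
    intro h0 h
    have hp' : p.Prime := hp
    have hx : x ≠ 0 := by rintro rfl; simp at h0
    rw [mul_assoc, Nat.totient_mul_of_prime_of_dvd hp'
      (Dvd.dvd.mul_left (h p hp' (dvd_mul_right _ _)) _),
      ih hx (fun k hk hd => h k hk (Dvd.dvd.mul_left hd _)), mul_assoc]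

/-- With `a' = a/gcd(a,b)`, `b' = b/gcd(a,b)`, `s = ∏_{p | a'b'} p`: if
`a'r+1` and `b'r+1` are primes not dividing `b'ℓs` resp. `a'ℓs`, then
`m₁ = b'ℓs(a'r+1)` and `m₂ = a'ℓs(b'r+1)` satisfy `φ(m₁) = φ(m₂)` and
`m₁ - m₂ = ℓ·κ(a,b)`. -/
theorem stmt_3 (a b ℓ r : ℕ) (ha : 0 < a) (hab : a < b) (hl : 0 < ℓ) (hr : 0 < r)
    (a' b' s p q m₁ m₂ : ℕ)
    (ha' : a' = a / Nat.gcd a b) (hb' : b' = b / Nat.gcd a b)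
    (hs : s = ∏ p ∈ (a' * b').primeFactors, p)
    (hpdef : p = a' * r + 1) (hqdef : q = b' * r + 1)
    (hp : p.Prime) (hq : q.Prime)
    (hpnd : ¬ p ∣ b' * ℓ * s) (hqnd : ¬ q ∣ a' * ℓ * s)
    (hm₁ : m₁ = b' * ℓ * s * (a' * r + 1)) (hm₂ : m₂ = a' * ℓ * s * (b' * r + 1)) :
    Nat.totient m₁ = Nat.totient m₂ ∧ m₁ - m₂ = ℓ * kappa a b := by
  have ha0 : a' ≠ 0 := by
    rintro h; rw [h] at hpdef; simp at hpdef; exact hp.ne_one hpdef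
  have hb0 : b' ≠ 0 := by
    rintro h; rw [h] at hqdef; simp at hqdef; exact hq.ne_one hqdef
  have hdvd : ∀ k : ℕ, k.Prime → k ∣ a' * b' → k ∣ ℓ * s := by
    intro k hk hd
    rw [hs]
    exact Dvd.dvd.mul_left (Finset.dvd_prod_of_mem (fun p => p)
      (Nat.mem_primeFactors.2 ⟨hk, hd, mul_ne_zero ha0 hb0⟩)) _
  have h1 := totient_aux (ℓ * s) b' hb0 (fun k hk hd => hdvd k hk (Dvd.dvd.mul_left hd _))
  have h2 := totient_aux (ℓ * s) a' ha0 (fun k hk hd => hdvd k hk (Dvd.dvd.mul_right hd _))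
  constructor
  · rw [hm₁, hm₂, ← hpdef, ← hqdef,
      Nat.totient_mul ((Nat.Prime.coprime_iff_not_dvd hp).2 hpnd).symm,
      Nat.totient_mul ((Nat.Prime.coprime_iff_not_dvd hq).2 hqnd).symm,
      Nat.totient_prime hp, Nat.totient_prime hq, mul_assoc b', mul_assoc a', h1, h2,
      hpdef, hqdef, Nat.add_sub_cancel, Nat.add_sub_cancel]
    ring
  · unfold kappa
    rw [← ha', ← hb', ← hs, hm₁, hm₂]
    have e1 : b' * ℓ * s * (a' * r + 1) = ℓ * s * a' * b' * r + ℓ * s * b' := by ring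
    have e2 : a' * ℓ * s * (b' * r + 1) = ℓ * s * a' * b' * r + ℓ * s * a' := by ring
    rw [e1, e2, Nat.add_sub_add_left, ← Nat.mul_sub]
    ring
end

section
/- Assume that for every choice of 50 pairwise distinct positive integers a₁, …, a₅₀ there exist indices i ≠ j such that there are infinitely many positive integers n with aᵢn+1 and aⱼn+1 both prime. Then for every positive integer k that is a multiple of 442720643463713815200, the equation φ(n) = φ(n+k) has infinitely many solutions n. -/
theorem aux_totient_mul (t : ℕ) : ∀ u : ℕ, 0 < u → (∀ p, p.Prime → p ∣ u → p ∣ t) →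
    Nat.totient (u * t) = u * Nat.totient t := by
  intro u
  induction u using induction_on_primes with
  | zero => intro h; omega
  | one => intro _ _; simp
  | prime_mul p a hp ih =>
    intro h0 h
    have ha : 0 < a := Nat.pos_of_mul_pos_left h0
    have h1 := ih ha (fun q hq hqa => h q hq (hqa.mul_left p))
    have h2 : p ∣ a * t := (h p hp (dvd_mul_right p a)).mul_left a
    rw [mul_assoc, Nat.totient_mul_of_prime_of_dvd hp h2, h1, mul_assoc]

theorem aux_core (k g u v : ℕ) (hk : 0 < k) (hg : 0 < g) (hu : 0 < u) (huv : u < v)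
    (hc : Nat.Coprime u v) (hd : (v - u) ∣ k) (hpu : ∀ p, p.Prime → p ∣ u * v → p ∣ k)
    (hinf : {n : ℕ | 0 < n ∧ ((g * u) * n + 1).Prime ∧ ((g * v) * n + 1).Prime}.Infinite) :
    {n : ℕ | 0 < n ∧ Nat.totient n = Nat.totient (n + k)}.Infinite := by
  obtain ⟨d, rfl⟩ : ∃ d, v = u + d := ⟨v - u, by omega⟩
  have hd' : d ∣ k := by simpa using hd
  obtain ⟨t, rfl⟩ := hd'
  have ht : 0 < t := Nat.pos_of_mul_pos_left hk
  have hcd : Nat.Coprime u d := by simpa using hc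
  have hcd2 : Nat.Coprime (u + d) d := by simpa using hcd
  have h1 : ∀ p, p.Prime → p ∣ u → p ∣ t := by
    intro p hp hpd
    exact (Nat.Coprime.coprime_dvd_left hpd hcd).dvd_of_dvd_mul_left
      (hpu p hp (hpd.mul_right _))
  have h2 : ∀ p, p.Prime → p ∣ u + d → p ∣ t := by
    intro p hp hpd
    exact (Nat.Coprime.coprime_dvd_left hpd hcd2).dvd_of_dvd_mul_left
      (hpu p hp (hpd.mul_left _))
  have e1 := aux_totient_mul t u hu h1
  have e2 := aux_totient_mul t (u + d) (by omega) h2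
  refine Set.infinite_of_forall_exists_gt fun N => ?_
  obtain ⟨m, ⟨hm0, hp, hq⟩, hm⟩ := hinf.exists_gt (N + (u + d) * t)
  have hgu : m ≤ g * u * m := Nat.le_mul_of_pos_left m (Nat.mul_pos hg hu)
  have hgv : m ≤ g * (u + d) * m := Nat.le_mul_of_pos_left m (Nat.mul_pos hg (by omega))
  have hut : 0 < u * t := Nat.mul_pos hu ht
  have hvt : u * t ≤ (u + d) * t := Nat.mul_le_mul_right t (by omega)
  have c1 : Nat.Coprime (u * t) (g * (u + d) * m + 1) :=
    (Nat.coprime_of_lt_prime hut.ne' (by omega) hq).symm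
  have c2 : Nat.Coprime ((u + d) * t) (g * u * m + 1) :=
    (Nat.coprime_of_lt_prime (by omega) (by omega) hp).symm
  refine ⟨u * t * (g * (u + d) * m + 1), ⟨by positivity, ?_⟩, ?_⟩
  · have : u * t * (g * (u + d) * m + 1) + d * t = (u + d) * t * (g * u * m + 1) := by ring
    rw [this, Nat.totient_mul c1, Nat.totient_mul c2, Nat.totient_prime hp,
      Nat.totient_prime hq, e1, e2]
    simp only [Nat.add_sub_cancel]
    ring
  · have := Nat.le_mul_of_pos_left (g * (u + d) * m + 1) hut
    omega

def auxA (i : Fin 50) : ℕ := if i.val = 0 then 49 else 2 * (i.val + 1)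

theorem auxA_check : ∀ i j : Fin 50, auxA i < auxA j →
    (auxA j / Nat.gcd (auxA i) (auxA j) - auxA i / Nat.gcd (auxA i) (auxA j))
      ∣ 442720643463713815200 ∧ auxA i * auxA j ∣ 442720643463713815200 ^ 20 := by
  decide +kernel

theorem aux_pair (k : ℕ) (hk : 0 < k) (hK : 442720643463713815200 ∣ k) (i j : Fin 50)
    (hij : auxA i < auxA j) (hi : 0 < auxA i)
    (hinf : {n : ℕ | 0 < n ∧ (auxA i * n + 1).Prime ∧ (auxA j * n + 1).Prime}.Infinite) :
    {n : ℕ | 0 < n ∧ Nat.totient n = Nat.totient (n + k)}.Infinite := by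
  obtain ⟨hd, hr⟩ := auxA_check i j hij
  generalize auxA i = A at *
  generalize auxA j = B at *
  have hg : 0 < Nat.gcd A B := Nat.gcd_pos_of_pos_left _ hi
  have hA : Nat.gcd A B * (A / Nat.gcd A B) = A := Nat.mul_div_cancel' (Nat.gcd_dvd_left A B)
  have hB : Nat.gcd A B * (B / Nat.gcd A B) = B := Nat.mul_div_cancel' (Nat.gcd_dvd_right A B)
  refine aux_core k (Nat.gcd A B) (A / Nat.gcd A B) (B / Nat.gcd A B) hk hg
    (Nat.div_pos (Nat.gcd_le_left B hi) hg) ?_ (Nat.coprime_div_gcd_div_gcd hg)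
    (hd.trans hK) ?_ ?_
  · refine Nat.lt_of_mul_lt_mul_left (a := Nat.gcd A B) ?_
    rw [hA, hB]; exact hij
  · intro p hp hpd
    refine dvd_trans (hp.dvd_of_dvd_pow (dvd_trans (dvd_trans hpd ?_) hr)) hK
    exact Nat.mul_dvd_mul (Nat.div_dvd_of_dvd (Nat.gcd_dvd_left A B))
      (Nat.div_dvd_of_dvd (Nat.gcd_dvd_right A B))
  · rw [hA, hB]; exact hinf


/-- Assuming the consequence of `DHL*(50;2)` (for any 50 pairwise distinct positive
integers `a₁,…,a₅₀` some pair of forms `aᵢn+1`, `aⱼn+1` is simultaneously prime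
infinitely often), the equation `φ(n) = φ(n+k)` has infinitely many solutions for
every positive multiple `k` of `442720643463713815200`. -/
theorem stmt_5
    (hDHL : ∀ a : Fin 50 → ℕ, (∀ i, 0 < a i) → Function.Injective a →
      ∃ i j : Fin 50, i ≠ j ∧
        {n : ℕ | 0 < n ∧ (a i * n + 1).Prime ∧ (a j * n + 1).Prime}.Infinite) :
    ∀ k : ℕ, 0 < k → 442720643463713815200 ∣ k →
      {n : ℕ | 0 < n ∧ Nat.totient n = Nat.totient (n + k)}.Infinite := by
  intro k hk hK
  have hpos : ∀ i, 0 < auxA i := by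
    intro i; unfold auxA; split_ifs <;> omega
  have hinj : Function.Injective auxA := by
    intro i j h
    apply Fin.ext
    unfold auxA at h
    split_ifs at h <;> omega
  obtain ⟨i, j, hij, hinf⟩ := hDHL auxA hpos hinj
  rcases lt_or_gt_of_ne (fun h => hij (hinj h)) with h | h
  · exact aux_pair k hk hK i j h (hpos i) hinf
  · refine aux_pair k hk hK j i h (hpos j) (hinf.mono ?_)
    rintro n ⟨h0, h1, h2⟩
    exact ⟨h0, h2, h1⟩
end

section
/- Assume that for every choice of 50 pairwise distinct positive integers a₁, …, a₅₀ there exist indices i ≠ j such that there are infinitely many positive integers n with aᵢn+1 and aⱼn+1 both prime. Then there is an even positive integer ℓ ≤ 3570 such that for every positive integer k divisible by ℓ, the equation φ(n) = φ(n+k) has infinitely many solutions n; consequently, for every real x ≥ 1, the number of positive integers k ≤ x for which φ(n) = φ(n+k) has infinitely many solutions is at least ⌊x/3570⌋. -/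
def fordSet : List ℕ := [24, 30, 36, 40, 45, 48, 60, 72, 80, 90, 96, 108, 120, 135, 144, 150, 160, 180, 192, 200, 216, 225, 240, 270, 288, 300, 320, 324, 360, 375, 384, 400, 432, 450, 480, 500, 540, 576, 600, 648, 720, 750, 900, 960, 1080, 1200, 1440, 1500, 1800, 2160]

def fordA (i : Fin 50) : ℕ := fordSet.getD i.val 0

def fordC (a b : ℕ) : ℕ := Nat.gcd ((a / Nat.gcd a b) * (b / Nat.gcd a b)) 30

def fordL (a b : ℕ) : ℕ := fordC a b * (b / Nat.gcd a b - a / Nat.gcd a b)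

def fordChk (a b : ℕ) : Bool :=
  Nat.ble b a || (Nat.ble (fordL a b) 3570 && Nat.beq (fordL a b % 2) 0 &&
    Nat.beq (fordC a b ^ 20 % ((a / Nat.gcd a b) * (b / Nat.gcd a b))) 0)

lemma fordChk_all : (fordSet.all fun a => fordSet.all fun b => fordChk a b) = true := by
  decide +kernel

lemma ford_tot {A m : ℕ} (hA : 0 < A) (hm : 0 < m) (h : A ∣ m ^ 20) :
    Nat.totient (m * A) = A * Nat.totient m := by
  have hpf : (m * A).primeFactors = m.primeFactors := by
    rw [Nat.primeFactors_mul hm.ne' hA.ne']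
    apply Finset.union_eq_left.2
    have := Nat.primeFactors_mono h (by positivity)
    rwa [Nat.primeFactors_pow _ (by norm_num)] at this
  have h1 := Nat.totient_mul_prod_primeFactors (m * A)
  have h2 := Nat.totient_mul_prod_primeFactors m
  rw [hpf] at h1
  have hP : 0 < ∏ p ∈ m.primeFactors, p :=
    Finset.prod_pos fun p hp => (Nat.prime_of_mem_primeFactors hp).pos
  apply Nat.eq_of_mul_eq_mul_right hP
  rw [h1, mul_assoc A, h2]; ring

lemma ford_inf {g A B m : ℕ} (hg : 0 < g) (hA : 0 < A) (hAB : A < B) (hm : 0 < m)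
    (h : A * B ∣ m ^ 20)
    (hS : {n : ℕ | 0 < n ∧ (g * A * n + 1).Prime ∧ (g * B * n + 1).Prime}.Infinite) :
    {n : ℕ | 0 < n ∧ Nat.totient n = Nat.totient (n + m * (B - A))}.Infinite := by
  have hB : 0 < B := by omega
  have hS' := hS.sdiff (Set.finite_Iic (m * A + m * B))
  have hinj : Function.Injective (fun n : ℕ => m * A * (g * B * n + 1)) := by
    intro x y hxy
    have h1 := Nat.eq_of_mul_eq_mul_left (by positivity) hxy
    exact Nat.eq_of_mul_eq_mul_left (show 0 < g * B by positivity) (by omega)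
  refine (hS'.image hinj.injOn).mono ?_
  rintro _ ⟨n, ⟨⟨hn, hp, hq⟩, hlt⟩, rfl⟩
  simp only [Set.mem_Iic, not_le] at hlt
  have key : ∀ X Y : ℕ, 0 < X → 0 < Y → X ∣ m ^ 20 → m * X < n → (g * Y * n + 1).Prime →
      Nat.totient (m * X * (g * Y * n + 1)) = X * Nat.totient m * (g * Y * n) := by
    intro X Y hX hY hd hl hpr
    have hgy : n ≤ g * Y * n := Nat.le_mul_of_pos_left _ (by positivity)
    have hc : Nat.Coprime (m * X) (g * Y * n + 1) := by
      apply Nat.Coprime.symm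
      rw [hpr.coprime_iff_not_dvd]
      intro hdv
      have := Nat.le_of_dvd (by positivity) hdv
      omega
    rw [Nat.totient_mul hc, ford_tot hX hm hd, Nat.totient_prime hpr]
    simp
  refine ⟨by positivity, ?_⟩
  have e : m * A * (g * B * n + 1) + m * (B - A) = m * B * (g * A * n + 1) := by
    obtain ⟨d, rfl⟩ := Nat.exists_eq_add_of_lt hAB
    have : A + d + 1 - A = d + 1 := by omega
    rw [this]; ring
  show Nat.totient (m * A * (g * B * n + 1)) = _
  rw [e, key A B hA hB ((Dvd.intro _ rfl).trans h) (by omega) hq,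
    key B A hB hA ((Dvd.intro_left _ rfl).trans h) (by omega) hp]
  ring

lemma ford_pair {a b : ℕ} (ha : 0 < a) (hab : a < b) (hc : fordChk a b = true)
    (hS : {n : ℕ | 0 < n ∧ (a * n + 1).Prime ∧ (b * n + 1).Prime}.Infinite) :
    ∃ ℓ : ℕ, 0 < ℓ ∧ Even ℓ ∧ ℓ ≤ 3570 ∧
      ∀ k : ℕ, 0 < k → ℓ ∣ k →
        {n : ℕ | 0 < n ∧ Nat.totient n = Nat.totient (n + k)}.Infinite := by
  have hg : 0 < Nat.gcd a b := Nat.gcd_pos_of_pos_left _ ha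
  have eA : Nat.gcd a b * (a / Nat.gcd a b) = a := Nat.mul_div_cancel' (Nat.gcd_dvd_left a b)
  have eB : Nat.gcd a b * (b / Nat.gcd a b) = b := Nat.mul_div_cancel' (Nat.gcd_dvd_right a b)
  have h0 : Nat.ble b a = false := by
    rw [Bool.eq_false_iff]; intro h; exact absurd (Nat.le_of_ble_eq_true h) (by omega)
  unfold fordChk at hc
  rw [h0, Bool.false_or, Bool.and_eq_true, Bool.and_eq_true] at hc
  obtain ⟨⟨k1, k2⟩, k3⟩ := hc
  have h1 := Nat.le_of_ble_eq_true k1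
  have h2 := Nat.eq_of_beq_eq_true k2
  have h3 := Nat.dvd_of_mod_eq_zero (Nat.eq_of_beq_eq_true k3)
  have hcpos : 0 < fordC a b := Nat.gcd_pos_of_pos_right _ (by norm_num)
  clear k1 k2 k3
  unfold fordL at h1 h2
  generalize fordC a b = c at *
  generalize hgg : Nat.gcd a b = g at *
  generalize a / g = A at *
  generalize b / g = B at *
  subst eA eB
  have hA : 0 < A := Nat.pos_of_mul_pos_left ha
  have hAB : A < B := Nat.lt_of_mul_lt_mul_left hab
  refine ⟨c * (B - A), Nat.mul_pos hcpos (by omega), Nat.even_iff.2 h2, h1, ?_⟩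
  rintro k hk ⟨t, rfl⟩
  have ht : 0 < t := Nat.pos_of_ne_zero (by rintro rfl; simp at hk)
  have := ford_inf (m := c * t) hg hA hAB (by positivity)
    (h3.trans (pow_dvd_pow_of_dvd (Dvd.intro _ rfl) 20)) hS
  rwa [show c * (B - A) * t = c * t * (B - A) by ring]

/-- Assuming the consequence of `DHL*(50;2)`, there is an even `ℓ ≤ 3570` such that
`S_k` holds whenever `ℓ ∣ k`; consequently for every real `x ≥ 1` there are at
least `⌊x/3570⌋` positive integers `k ≤ x` for which `φ(n) = φ(n+k)` has
infinitely many solutions. -/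
theorem stmt_6
    (hDHL : ∀ a : Fin 50 → ℕ, (∀ i, 0 < a i) → Function.Injective a →
      ∃ i j : Fin 50, i ≠ j ∧
        {n : ℕ | 0 < n ∧ (a i * n + 1).Prime ∧ (a j * n + 1).Prime}.Infinite) :
    (∃ ℓ : ℕ, 0 < ℓ ∧ Even ℓ ∧ ℓ ≤ 3570 ∧
      ∀ k : ℕ, 0 < k → ℓ ∣ k →
        {n : ℕ | 0 < n ∧ Nat.totient n = Nat.totient (n + k)}.Infinite) ∧
    ∀ x : ℝ, 1 ≤ x →
      ⌊x / 3570⌋₊ ≤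
        {k : ℕ | 0 < k ∧ (k : ℝ) ≤ x ∧
          {n : ℕ | 0 < n ∧ Nat.totient n = Nat.totient (n + k)}.Infinite}.ncard := by
  have hfirst : ∃ ℓ : ℕ, 0 < ℓ ∧ Even ℓ ∧ ℓ ≤ 3570 ∧
      ∀ k : ℕ, 0 < k → ℓ ∣ k →
        {n : ℕ | 0 < n ∧ Nat.totient n = Nat.totient (n + k)}.Infinite := by
    have hpos : ∀ i, 0 < fordA i := by decide +kernel
    have hinj : Function.Injective fordA := by
      have : ∀ i j, fordA i = fordA j → i = j := by decide +kernel
      exact fun i j => this i j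
    have hmem : ∀ i, fordA i ∈ fordSet := by decide +kernel
    have hchk : ∀ i j, fordChk (fordA i) (fordA j) = true := fun i j =>
      List.all_eq_true.1 (List.all_eq_true.1 fordChk_all _ (hmem i)) _ (hmem j)
    obtain ⟨i, j, hij, hS⟩ := hDHL fordA hpos hinj
    rcases lt_or_gt_of_ne (fun h => hij (hinj h)) with hlt | hlt
    · exact ford_pair (hpos i) hlt (hchk i j) hS
    · refine ford_pair (hpos j) hlt (hchk j i) (hS.mono ?_)
      rintro n ⟨h1, h2, h3⟩
      exact ⟨h1, h3, h2⟩
  refine ⟨hfirst, ?_⟩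
  obtain ⟨l, hl, -, hle, hk⟩ := hfirst
  intro x hx
  have hfin : {k : ℕ | 0 < k ∧ (k : ℝ) ≤ x ∧
      {n : ℕ | 0 < n ∧ Nat.totient n = Nat.totient (n + k)}.Infinite}.Finite := by
    refine (Set.finite_Iic ⌊x⌋₊).subset ?_
    rintro k ⟨-, h, -⟩
    exact Nat.le_floor h
  have hinj : Function.Injective (fun t : ℕ => l * t) :=
    fun a b h => Nat.eq_of_mul_eq_mul_left hl h
  calc ⌊x / 3570⌋₊ = ((fun t : ℕ => l * t) '' (Finset.Icc 1 ⌊x / 3570⌋₊ : Set ℕ)).ncard := by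
        rw [Set.ncard_image_of_injective _ hinj, Set.ncard_coe_finset]; simp
    _ ≤ _ := by
        refine Set.ncard_le_ncard ?_ hfin
        rintro _ ⟨t, ht, rfl⟩
        simp only [Finset.coe_Icc, Set.mem_Icc] at ht
        have hpos : 0 < l * t := Nat.mul_pos hl ht.1
        refine ⟨hpos, ?_, hk _ hpos (Dvd.intro _ rfl)⟩
        have h1 : (t : ℝ) ≤ x / 3570 := (Nat.le_floor_iff (by positivity)).1 ht.2
        have h2 : (l : ℝ) ≤ 3570 := by exact_mod_cast hle
        have h3 : (0 : ℝ) ≤ t := by positivity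
        push_cast
        rw [le_div_iff₀ (by norm_num)] at h1
        nlinarith
end

section
/- Let A = {1, 2, 4, 5, 6, 7, 8, 9, 10, 11, 12, 13, 14, 15, 16, 17, 18, 19, 20, 21, 22, 23, 24, 25, 26, 27, 28, 29, 30, 31, 32, 33, 34, 35, 36, 37, 38, 39, 40, 41, 42, 43, 44, 45, 46, 47, 48, 49, 52, 56}. Then the least common multiple of the numbers κ(a,b) over all pairs a < b with a, b ∈ A equals 442720643463713815200 = 2⁵ · 3³ · 5² · 7 · 11 · 13 · 17 · 19 · 23 · 29 · 31 · 37 · 41 · 43 · 47. -/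
def myPrimes : List ℕ := [2, 3, 5, 7, 11, 13, 17, 19, 23, 29, 31, 37, 41, 43, 47, 53]

def myList : List ℕ := [1, 2, 4, 5, 6, 7, 8, 9, 10, 11, 12, 13, 14, 15, 16, 17, 18, 19, 20,
      21, 22, 23, 24, 25, 26, 27, 28, 29, 30, 31, 32, 33, 34, 35, 36, 37, 38, 39,
      40, 41, 42, 43, 44, 45, 46, 47, 48, 49, 52, 56]

def myRad (n : ℕ) : ℕ := myPrimes.foldr (fun p r => bif Nat.beq (n % p) 0 then p * r else r) 1

def myKappa (a b : ℕ) : ℕ :=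
  (b / Nat.gcd a b - a / Nat.gcd a b) * myRad ((a / Nat.gcd a b) * (b / Nat.gcd a b))

theorem mem_myPrimes (p : ℕ) (hp : p.Prime) (h : p ≤ 56) : p ∈ myPrimes := by
  unfold myPrimes
  interval_cases p <;> first | decide | (exfalso; revert hp; norm_num)

theorem foldr_eq (n : ℕ) (L : List ℕ) (hL : L.Nodup) :
    L.foldr (fun p r => bif Nat.beq (n % p) 0 then p * r else r) 1 =
      ∏ p ∈ L.toFinset.filter (fun p => p ∣ n), p := by
  induction L with
  | nil => simp
  | cons x L ih =>
    rw [List.nodup_cons] at hL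
    rw [List.foldr_cons, ih hL.2, List.toFinset_cons, Finset.filter_insert]
    by_cases h : x ∣ n
    · have h' : Nat.beq (n % x) 0 = true := by
        rw [Nat.beq_eq]; exact Nat.mod_eq_zero_of_dvd h
      rw [h', if_pos h, Finset.prod_insert (by simp [hL.1])]
      rfl
    · have h' : Nat.beq (n % x) 0 = false := by
        rw [Bool.eq_false_iff, Ne, Nat.beq_eq]
        exact fun e => h (Nat.dvd_of_mod_eq_zero e)
      rw [h', if_neg h]
      rfl

theorem myRad_eq (a b : ℕ) (ha : 0 < a) (hb : 0 < b) (ha' : a ≤ 56) (hb' : b ≤ 56) :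
    ∏ p ∈ (a * b).primeFactors, p = myRad (a * b) := by
  unfold myRad
  rw [foldr_eq _ _ (by decide)]
  congr 1
  ext p
  simp only [Nat.mem_primeFactors, Finset.mem_filter, List.mem_toFinset]
  constructor
  · rintro ⟨hp, hd, _⟩
    refine ⟨mem_myPrimes p hp ?_, hd⟩
    rcases hp.dvd_mul.1 hd with h | h
    · exact (Nat.le_of_dvd ha h).trans ha'
    · exact (Nat.le_of_dvd hb h).trans hb'
  · rintro ⟨hp, hd⟩
    refine ⟨?_, hd, by positivity⟩
    simp only [myPrimes, List.mem_cons, List.not_mem_nil, or_false] at hp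
    rcases hp with h|h|h|h|h|h|h|h|h|h|h|h|h|h|h|h <;> subst h <;> norm_num

theorem kappa_eq (a b : ℕ) (ha : 0 < a) (hb : 0 < b) (ha' : a ≤ 56) (hb' : b ≤ 56) :
    kappa a b = myKappa a b := by
  unfold kappa myKappa
  rw [myRad_eq]
  · exact Nat.div_pos (Nat.gcd_le_left _ ha) (Nat.gcd_pos_of_pos_left _ ha)
  · exact Nat.div_pos (Nat.gcd_le_right _ hb) (Nat.gcd_pos_of_pos_left _ ha)
  · exact (Nat.div_le_self _ _).trans ha'
  · exact (Nat.div_le_self _ _).trans hb'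

theorem upper_check : (myList.all fun a => myList.all fun b =>
    (Nat.ble b a) || Nat.beq (442720643463713815200 % myKappa a b) 0) = true := by
  decide +kernel

theorem list_bd : ∀ a ∈ myList, 0 < a ∧ a ≤ 56 := by decide

/-- The lcm of `κ(a,b)` over all pairs `a < b` from the 50-element set `A`
equals `442720643463713815200 = 2⁵·3³·5²·7·11·13·17·19·23·29·31·37·41·43·47`. -/
theorem stmt_7 (A : Finset ℕ)
    (hA : A = {1, 2, 4, 5, 6, 7, 8, 9, 10, 11, 12, 13, 14, 15, 16, 17, 18, 19, 20,
      21, 22, 23, 24, 25, 26, 27, 28, 29, 30, 31, 32, 33, 34, 35, 36, 37, 38, 39,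
      40, 41, 42, 43, 44, 45, 46, 47, 48, 49, 52, 56}) :
    ((A ×ˢ A).filter (fun p => p.1 < p.2)).lcm (fun p => kappa p.1 p.2) =
        442720643463713815200 ∧
      (442720643463713815200 : ℕ) =
        2 ^ 5 * 3 ^ 3 * 5 ^ 2 * 7 * 11 * 13 * 17 * 19 * 23 * 29 * 31 * 37 * 41 * 43 * 47 := by
  refine ⟨?_, by norm_num⟩
  have hmem : ∀ a, a ∈ A ↔ a ∈ myList := by
    intro a
    rw [hA]
    simp only [myList, Finset.mem_insert, Finset.mem_singleton, List.mem_cons,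
      List.not_mem_nil, or_false]
  clear hA
  apply Nat.dvd_antisymm
  · apply Finset.lcm_dvd
    rintro ⟨a, b⟩ h
    simp only [Finset.mem_filter, Finset.mem_product, hmem] at h
    obtain ⟨⟨ha, hb⟩, hab⟩ := h
    have h1 := list_bd a ha
    have h2 := list_bd b hb
    show kappa a b ∣ _
    rw [kappa_eq a b h1.1 h2.1 h1.2 h2.2]
    have h3 := List.all_eq_true.1 (List.all_eq_true.1 upper_check a ha) b hb
    rw [Bool.or_eq_true, Nat.ble_eq, Nat.beq_eq] at h3
    rcases h3 with h3 | h3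
    · omega
    · exact Nat.dvd_of_mod_eq_zero h3
  · set M := ((A ×ˢ A).filter (fun p => p.1 < p.2)).lcm (fun p => kappa p.1 p.2) with hM
    have key : ∀ a b q : ℕ, a ∈ myList → b ∈ myList → a < b → myKappa a b % q = 0 → q ∣ M := by
      intro a b q ha hb hab hq
      have h1 := list_bd a ha
      have h2 := list_bd b hb
      refine (Nat.dvd_of_mod_eq_zero hq).trans ?_
      rw [← kappa_eq a b h1.1 h2.1 h1.2 h2.2]
      exact Finset.dvd_lcm (f := fun p : ℕ × ℕ => kappa p.1 p.2) (b := (a, b))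
        (by simp only [Finset.mem_filter, Finset.mem_product, hmem]; exact ⟨⟨ha, hb⟩, hab⟩)
    clear_value M
    have k32 : 32 ∣ M := key 1 33 32 (by decide) (by decide) (by decide) (by decide +kernel)
    have k27 : 27 ∣ M := key 1 28 27 (by decide) (by decide) (by decide) (by decide +kernel)
    have k25 : 25 ∣ M := key 1 26 25 (by decide) (by decide) (by decide) (by decide +kernel)
    have k7 : 7 ∣ M := key 1 7 7 (by decide) (by decide) (by decide) (by decide +kernel)
    have k11 : 11 ∣ M := key 1 11 11 (by decide) (by decide) (by decide) (by decide +kernel)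
    have k13 : 13 ∣ M := key 1 13 13 (by decide) (by decide) (by decide) (by decide +kernel)
    have k17 : 17 ∣ M := key 1 17 17 (by decide) (by decide) (by decide) (by decide +kernel)
    have k19 : 19 ∣ M := key 1 19 19 (by decide) (by decide) (by decide) (by decide +kernel)
    have k23 : 23 ∣ M := key 1 23 23 (by decide) (by decide) (by decide) (by decide +kernel)
    have k29 : 29 ∣ M := key 1 29 29 (by decide) (by decide) (by decide) (by decide +kernel)
    have k31 : 31 ∣ M := key 1 31 31 (by decide) (by decide) (by decide) (by decide +kernel)
    have k37 : 37 ∣ M := key 1 37 37 (by decide) (by decide) (by decide) (by decide +kernel)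
    have k41 : 41 ∣ M := key 1 41 41 (by decide) (by decide) (by decide) (by decide +kernel)
    have k43 : 43 ∣ M := key 1 43 43 (by decide) (by decide) (by decide) (by decide +kernel)
    have k47 : 47 ∣ M := key 1 47 47 (by decide) (by decide) (by decide) (by decide +kernel)
    rw [show (442720643463713815200 : ℕ) =
      32 * 27 * 25 * 7 * 11 * 13 * 17 * 19 * 23 * 29 * 31 * 37 * 41 * 43 * 47 by norm_num]
    repeat' apply Nat.Coprime.mul_dvd_of_dvd_of_dvd
    all_goals first | assumption | norm_num
end

section
/- Let m ≥ 2 and suppose a₁, …, a_m are pairwise distinct positive integers such that there are infinitely many positive integers r for which a₁r+1, …, a_mr+1 are all prime. Then there exist pairwise distinct positive integers h₁, …, h_m such that for every positive integer ℓ, the simultaneous equations φ(n + ℓh₁) = φ(n + ℓh₂) = ⋯ = φ(n + ℓh_m) have infinitely many solutions in positive integers n. -/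
/-- If `a₁,…,a_m` (`m ≥ 2`) are pairwise distinct positive integers such that
`a₁r+1,…,a_mr+1` are simultaneously prime for infinitely many `r`, then there are
pairwise distinct positive integers `h₁,…,h_m` such that for every `ℓ ≥ 1` the
equations `φ(n+ℓh₁) = ⋯ = φ(n+ℓh_m)` have infinitely many solutions `n`. -/
theorem stmt_9 (m : ℕ) (hm : 2 ≤ m) (a : Fin m → ℕ)
    (hapos : ∀ i, 0 < a i) (hainj : Function.Injective a)
    (hprimes : {r : ℕ | 0 < r ∧ ∀ i, (a i * r + 1).Prime}.Infinite) :
    ∃ h : Fin m → ℕ, (∀ i, 0 < h i) ∧ Function.Injective h ∧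
      ∀ ℓ : ℕ, 0 < ℓ →
        {n : ℕ | 0 < n ∧ ∀ i j : Fin m,
          Nat.totient (n + ℓ * h i) = Nat.totient (n + ℓ * h j)}.Infinite := by
  classical
  obtain ⟨P, hP⟩ : ∃ P, P = ∏ i, a i := ⟨_, rfl⟩
  have hPpos : 0 < P := hP ▸ Finset.prod_pos (fun i _ => hapos i)
  have hdvd : ∀ i, a i ∣ P := fun i => hP ▸ Finset.dvd_prod_of_mem a (Finset.mem_univ i)
  choose c hc using hdvd
  have hcpos : ∀ i, 0 < c i := fun i => by
    rcases Nat.eq_zero_or_pos (c i) with h | h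
    · have := hc i
      rw [h] at this
      omega
    · exact h
  refine ⟨fun i => P * c i, fun i => Nat.mul_pos hPpos (hcpos i), ?_, ?_⟩
  · intro i j hij
    have h1 : c i = c j := Nat.eq_of_mul_eq_mul_left hPpos hij
    apply hainj
    have h2 : a i * c i = a j * c i := by
      rw [← hc i, h1, ← hc j]
    exact Nat.eq_of_mul_eq_mul_right (hcpos i) h2
  · intro l hl
    have hinf := hprimes.diff (Set.finite_Iic (l * (P * P)))
    refine (hinf.image (f := fun r => l * (P * P) * r) ?_).mono ?_
    · intro r _ s _ hrs
      exact Nat.eq_of_mul_eq_mul_left (Nat.mul_pos hl (Nat.mul_pos hPpos hPpos)) hrs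
    · rintro _ ⟨r, ⟨⟨hr, hp⟩, hbig⟩, rfl⟩
      have hbig' : l * (P * P) < r := by simpa using hbig
      have key : ∀ i, Nat.totient (l * (P * P) * r + l * (P * c i))
          = Nat.totient (l * (P * P)) * r := by
        intro i
        have hb : 0 < l * (P * c i) := Nat.mul_pos hl (Nat.mul_pos hPpos (hcpos i))
        have hfac : a i * (l * (P * c i)) = l * (P * P) := by
          calc a i * (l * (P * c i)) = l * (P * (a i * c i)) := by ring
            _ = _ := by rw [← hc i]
        have e1 : l * (P * P) * r + l * (P * c i) = (l * (P * c i)) * (a i * r + 1) := by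
          rw [← hfac]; ring
        have hlt : l * (P * c i) < a i * r + 1 := by
          have h1 : l * (P * c i) ≤ l * (P * P) := hfac ▸ Nat.le_mul_of_pos_left _ (hapos i)
          have h2 : r ≤ a i * r := Nat.le_mul_of_pos_left _ (hapos i)
          omega
        have hcop : Nat.Coprime (l * (P * c i)) (a i * r + 1) :=
          (Nat.coprime_of_lt_prime hb.ne' hlt (hp i)).symm
        have hd : a i ∣ l * (P * c i) :=
          Dvd.dvd.mul_left (Dvd.dvd.mul_right ⟨c i, hc i⟩ _) _
        have hg := Nat.totient_gcd_mul_totient_mul (a i) (l * (P * c i))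
        rw [Nat.gcd_eq_left hd, hfac, mul_assoc] at hg
        have hg' := Nat.eq_of_mul_eq_mul_left (Nat.totient_pos.2 (hapos i)) hg
        rw [e1, Nat.totient_mul hcop, Nat.totient_prime (hp i), hg', Nat.add_sub_cancel]
        ring
      refine ⟨Nat.mul_pos (Nat.mul_pos hl (Nat.mul_pos hPpos hPpos)) hr, fun i j => ?_⟩
      exact (key i).trans (key j).symm
end

section
/- Let m ≥ 2 and let a₁, …, a_m be pairwise distinct positive integers. Set P = (a₁a₂⋯a_m)² and hⱼ = P/aⱼ for 1 ≤ j ≤ m. Let ℓ and r be positive integers such that for every j the number aⱼr+1 is prime and aⱼr+1 > ℓ·P. Then n = ℓ·P·r satisfies φ(n + ℓhⱼ) = φ(ℓ·P)·r for every j; in particular φ(n + ℓh₁) = φ(n + ℓh₂) = ⋯ = φ(n + ℓh_m). -/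
/-- With `P = (a₁⋯a_m)²`, `hⱼ = P/aⱼ`: if each `aⱼr+1` is prime and exceeds `ℓP`,
then `n = ℓPr` satisfies `φ(n + ℓhⱼ) = φ(ℓP)·r` for every `j`; in particular all
the values `φ(n + ℓhⱼ)` coincide. -/
theorem stmt_10 (m : ℕ) (hm : 2 ≤ m) (a : Fin m → ℕ)
    (hapos : ∀ i, 0 < a i) (hainj : Function.Injective a)
    (P : ℕ) (hP : P = (∏ i, a i) ^ 2)
    (h : Fin m → ℕ) (hh : ∀ j, h j = P / a j)
    (ℓ r : ℕ) (hl : 0 < ℓ) (hr : 0 < r)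
    (hprime : ∀ j, (a j * r + 1).Prime)
    (hbig : ∀ j, ℓ * P < a j * r + 1)
    (n : ℕ) (hn : n = ℓ * P * r) :
    (∀ j, Nat.totient (n + ℓ * h j) = Nat.totient (ℓ * P) * r) ∧
      ∀ i j : Fin m, Nat.totient (n + ℓ * h i) = Nat.totient (n + ℓ * h j) := by
  have key : ∀ j, Nat.totient (n + ℓ * h j) = Nat.totient (ℓ * P) * r := by
    intro j
    obtain ⟨t, ht⟩ : a j ∣ ∏ i, a i := Finset.dvd_prod_of_mem a (Finset.mem_univ j)
    have hP2 : P = a j * (a j * t ^ 2) := by rw [hP, ht]; ring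
    have hhj : h j = a j * t ^ 2 := by
      rw [hh, hP2, Nat.mul_div_cancel_left _ (hapos j)]
    have hPpos : 0 < P := by
      rw [hP]; exact pow_pos (Finset.prod_pos fun i _ => hapos i) 2
    have hPh : P = a j * h j := by rw [hhj, hP2]
    have hpos : 0 < ℓ * h j :=
      Nat.mul_pos hl (Nat.pos_of_mul_pos_left (a := a j) (by rw [← hPh]; exact hPpos))
    have e1 : n + ℓ * h j = ℓ * h j * (a j * r + 1) := by
      rw [hn, hPh]; ring
    have hlt : ℓ * h j < a j * r + 1 := by
      refine lt_of_le_of_lt ?_ (hbig j)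
      rw [hPh]
      exact Nat.mul_le_mul_left _ (Nat.le_mul_of_pos_left _ (hapos j))
    have hc : Nat.Coprime (ℓ * h j) (a j * r + 1) :=
      (Nat.coprime_of_lt_prime hpos.ne' hlt (hprime j)).symm
    have hd : a j ∣ ℓ * h j := by
      rw [hhj]; exact Dvd.dvd.mul_left (Dvd.intro _ rfl) _
    have e2 : Nat.totient (ℓ * P) = a j * Nat.totient (ℓ * h j) := by
      have h1 := Nat.totient_gcd_mul_totient_mul (a j) (ℓ * h j)
      rw [Nat.gcd_eq_left hd] at h1
      have h2 : ℓ * P = a j * (ℓ * h j) := by rw [hPh]; ring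
      rw [h2]
      apply Nat.eq_of_mul_eq_mul_left (Nat.totient_pos.2 (hapos j))
      rw [h1]; ring
    rw [e1, Nat.totient_mul hc, Nat.totient_prime (hprime j), e2, Nat.add_sub_cancel]
    ring
  exact ⟨key, fun i j => by rw [key i, key j]⟩
end

section
/- Assume that for every choice of 5 pairwise distinct positive integers a₁, …, a₅ there exist indices i ≠ j such that there are infinitely many positive integers n with aᵢn+1 and aⱼn+1 both prime. Then for every positive integer k divisible by 30, the equation φ(n) = φ(n+k) has infinitely many solutions n. -/
theorem aux_key (k m a b g : ℕ) (hk : 0 < k) (ha : 0 < a) (hg : 0 < g) (hb : m * b = m * a + k)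
    (hta : Nat.totient (m * a) = Nat.totient m * a)
    (htb : Nat.totient (m * b) = Nat.totient m * b) (hm : 0 < m)
    (hinf : {n : ℕ | 0 < n ∧ (g * a * n + 1).Prime ∧ (g * b * n + 1).Prime}.Infinite) :
    {n : ℕ | 0 < n ∧ Nat.totient n = Nat.totient (n + k)}.Infinite := by
  have hb0 : 0 < b := by
    rcases Nat.eq_zero_or_pos b with h | h
    · subst h; omega
    · exact h
  have hinf2 := hinf.sdiff (Set.finite_Iic (m * b + m * a))
  have hinj : Set.InjOn (fun n : ℕ => m * a * (g * b * n + 1))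
      ({n : ℕ | 0 < n ∧ (g * a * n + 1).Prime ∧ (g * b * n + 1).Prime} \
        Set.Iic (m * b + m * a)) := by
    intro x _ y _ h
    have h1 : m * a * (g * b * x + 1) = m * a * (g * b * y + 1) := h
    have h2 := Nat.eq_of_mul_eq_mul_left (Nat.mul_pos hm ha) h1
    have h3 : g * b * x = g * b * y := by omega
    exact Nat.eq_of_mul_eq_mul_left (Nat.mul_pos hg hb0) h3
  refine (hinf2.image hinj).mono ?_
  rintro _ ⟨n, ⟨⟨hn, hp, hq⟩, hlt⟩, rfl⟩
  have hlt : m * b + m * a < n := by simpa using hlt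
  have e : m * a * (g * b * n + 1) + k = m * b * (g * a * n + 1) := by
    have : m * b * (g * a * n + 1) = m * a * (g * b * n) + m * b := by ring
    rw [this, hb]; ring
  have c1 : Nat.Coprime (m * a) (g * b * n + 1) := by
    refine (Nat.coprime_of_lt_prime (Nat.mul_pos hm ha).ne' ?_ hq).symm
    have : 1 * n ≤ g * b * n := Nat.mul_le_mul_right _ (Nat.mul_pos hg hb0)
    omega
  have c2 : Nat.Coprime (m * b) (g * a * n + 1) := by
    refine (Nat.coprime_of_lt_prime (Nat.mul_pos hm hb0).ne' ?_ hp).symm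
    have : 1 * n ≤ g * a * n := Nat.mul_le_mul_right _ (Nat.mul_pos hg ha)
    omega
  refine ⟨Nat.mul_pos (Nat.mul_pos hm ha) (Nat.succ_pos _), ?_⟩
  show Nat.totient (m * a * (g * b * n + 1)) = Nat.totient (m * a * (g * b * n + 1) + k)
  rw [e, Nat.totient_mul c1, Nat.totient_mul c2, hta, htb, Nat.totient_prime hp,
    Nat.totient_prime hq]
  simp only [Nat.add_sub_cancel]
  ring

theorem aux_t (m p : ℕ) (hp : p.Prime) (h : p ∣ m) :
    Nat.totient (m * p) = Nat.totient m * p := by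
  rw [mul_comm, Nat.totient_mul_of_prime_of_dvd hp h, mul_comm]

theorem aux_t4 (m : ℕ) (h : 2 ∣ m) : Nat.totient (m * 4) = Nat.totient m * 4 := by
  rw [show m * 4 = m * 2 * 2 by ring, aux_t _ 2 Nat.prime_two (h.mul_right 2),
    aux_t _ 2 Nat.prime_two h]
  ring

theorem aux_t6 (m : ℕ) (h : 2 ∣ m) (h3 : 3 ∣ m) :
    Nat.totient (m * 6) = Nat.totient m * 6 := by
  rw [show m * 6 = m * 2 * 3 by ring, aux_t _ 3 Nat.prime_three (h3.mul_right 2),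
    aux_t _ 2 Nat.prime_two h]
  ring

/-- Assuming the consequence of `DHL*(5;2)` (for any 5 pairwise distinct positive
integers some pair of forms `aᵢn+1`, `aⱼn+1` is simultaneously prime infinitely
often), `φ(n) = φ(n+k)` has infinitely many solutions for every positive `k`
divisible by `30`. -/
theorem stmt_11
    (hDHL : ∀ a : Fin 5 → ℕ, (∀ i, 0 < a i) → Function.Injective a →
      ∃ i j : Fin 5, i ≠ j ∧
        {n : ℕ | 0 < n ∧ (a i * n + 1).Prime ∧ (a j * n + 1).Prime}.Infinite) :
    ∀ k : ℕ, 0 < k → 30 ∣ k →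
      {n : ℕ | 0 < n ∧ Nat.totient n = Nat.totient (n + k)}.Infinite := by
  rintro k hk ⟨t, rfl⟩
  have ht : 0 < t := by omega
  have t1 : ∀ m : ℕ, Nat.totient (m * 1) = Nat.totient m * 1 := by simp
  have t2 : ∀ m : ℕ, 2 ∣ m → Nat.totient (m * 2) = Nat.totient m * 2 :=
    fun m h => aux_t m 2 Nat.prime_two h
  have t3 : ∀ m : ℕ, 3 ∣ m → Nat.totient (m * 3) = Nat.totient m * 3 :=
    fun m h => aux_t m 3 Nat.prime_three h
  have H12 : ∀ g, 0 < g → _ := fun g hg => aux_key (30 * t) (30 * t) 1 2 g hk (by omega) hg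
    (by omega) (t1 _) (t2 _ (by omega)) (by omega)
  have H13 : ∀ g, 0 < g → _ := fun g hg => aux_key (30 * t) (15 * t) 1 3 g hk (by omega) hg
    (by omega) (t1 _) (t3 _ (by omega)) (by omega)
  have H14 : ∀ g, 0 < g → _ := fun g hg => aux_key (30 * t) (10 * t) 1 4 g hk (by omega) hg
    (by omega) (t1 _) (aux_t4 _ (by omega)) (by omega)
  have H16 : ∀ g, 0 < g → _ := fun g hg => aux_key (30 * t) (6 * t) 1 6 g hk (by omega) hg
    (by omega) (t1 _) (aux_t6 _ (by omega) (by omega)) (by omega)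
  have H23 : ∀ g, 0 < g → _ := fun g hg => aux_key (30 * t) (30 * t) 2 3 g hk (by omega) hg
    (by omega) (t2 _ (by omega)) (t3 _ (by omega)) (by omega)
  have H34 : ∀ g, 0 < g → _ := fun g hg => aux_key (30 * t) (30 * t) 3 4 g hk (by omega) hg
    (by omega) (t3 _ (by omega)) (aux_t4 _ (by omega)) (by omega)
  obtain ⟨i, j, hij, hinf⟩ := hDHL ![1, 2, 3, 4, 6] (by decide) (by decide)
  have key : ∀ i j : Fin 5, i < j →
      {n : ℕ | 0 < n ∧ ((![1, 2, 3, 4, 6] : Fin 5 → ℕ) i * n + 1).Prime ∧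
        ((![1, 2, 3, 4, 6] : Fin 5 → ℕ) j * n + 1).Prime}.Infinite →
      {n : ℕ | 0 < n ∧ Nat.totient n = Nat.totient (n + 30 * t)}.Infinite := by
    intro i j hij h
    fin_cases i <;> fin_cases j <;> first
      | exact absurd hij (by decide)
      | exact H12 1 (by decide) h
      | exact H12 2 (by decide) h
      | exact H12 3 (by decide) h
      | exact H13 1 (by decide) h
      | exact H13 2 (by decide) h
      | exact H14 1 (by decide) h
      | exact H16 1 (by decide) h
      | exact H23 1 (by decide) h
      | exact H23 2 (by decide) h
      | exact H34 1 (by decide) h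
  rcases lt_or_gt_of_ne hij with h | h
  · exact key i j h hinf
  · refine key j i h (hinf.mono ?_)
    rintro n ⟨h0, h1, h2⟩
    exact ⟨h0, h2, h1⟩
end

section
/- Assume that for every choice of 4 pairwise distinct positive integers a₁, …, a₄ there exist indices i ≠ j such that there are infinitely many positive integers n with aᵢn+1 and aⱼn+1 both prime. Then for every positive integer k divisible by 6, the equation φ(n) = φ(n+k) has infinitely many solutions n. -/
theorem key (a b k m₁ m₂ : ℕ) (ha : 0 < a) (hb : 0 < b) (hm₂ : 0 < m₂) (h1 : m₁ = m₂ + k)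
    (h2 : m₂ * b = m₁ * a) (h3 : Nat.totient m₂ * b = Nat.totient m₁ * a)
    (hS : {n : ℕ | 0 < n ∧ (a * n + 1).Prime ∧ (b * n + 1).Prime}.Infinite) :
    {n : ℕ | 0 < n ∧ Nat.totient n = Nat.totient (n + k)}.Infinite := by
  have hT := hS.diff (Set.finite_le_nat m₁)
  have hinj : Set.InjOn (fun n => m₂ * (b * n + 1))
      ({n : ℕ | 0 < n ∧ (a * n + 1).Prime ∧ (b * n + 1).Prime} \ {n | n ≤ m₁}) := by
    intro x _ y _ h
    have h' := Nat.eq_of_mul_eq_mul_left hm₂ h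
    exact Nat.eq_of_mul_eq_mul_left hb (by omega)
  refine (hT.image hinj).mono ?_
  rintro _ ⟨n, ⟨⟨hn, pa, pb⟩, hlt⟩, rfl⟩
  simp only [Set.mem_setOf_eq, not_le] at hlt ⊢
  refine ⟨by positivity, ?_⟩
  have e : m₂ * (b * n + 1) + k = m₁ * (a * n + 1) := by
    calc _ = (m₂ * b) * n + (m₂ + k) := by ring
      _ = _ := by rw [h2, ← h1]; ring
  have cop : ∀ m c : ℕ, 0 < m → m ≤ m₁ → 0 < c → (c * n + 1).Prime →
      Nat.totient (m * (c * n + 1)) = Nat.totient m * (c * n) := by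
    intro m c hm hm' hc hp
    have : n ≤ c * n := Nat.le_mul_of_pos_left n hc
    rw [Nat.totient_mul, Nat.totient_prime hp, Nat.add_sub_cancel]
    refine ((Nat.Prime.coprime_iff_not_dvd hp).2 fun hd => ?_).symm
    have := Nat.le_of_dvd hm hd
    omega
  rw [e, cop m₂ b hm₂ (by omega) hb pb, cop m₁ a (by omega) le_rfl ha pa, ← mul_assoc, h3,
    mul_assoc]

theorem tot2 (m : ℕ) : Nat.totient (2 * (2 * m)) = 2 * Nat.totient (2 * m) :=
  Nat.totient_mul_of_prime_of_dvd Nat.prime_two (Dvd.intro _ rfl)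

theorem tot3 (m : ℕ) : Nat.totient (3 * (3 * m)) = 3 * Nat.totient (3 * m) :=
  Nat.totient_mul_of_prime_of_dvd Nat.prime_three (Dvd.intro _ rfl)

theorem pairs (a b k : ℕ) (hk : 0 < k) (h6 : 6 ∣ k) (ha : 0 < a) (hab : a < b) (hb : b ≤ 4)
    (hS : {n : ℕ | 0 < n ∧ (a * n + 1).Prime ∧ (b * n + 1).Prime}.Infinite) :
    {n : ℕ | 0 < n ∧ Nat.totient n = Nat.totient (n + k)}.Infinite := by
  obtain ⟨q, rfl⟩ := h6
  have t12 : Nat.totient (12 * q) = 2 * Nat.totient (6 * q) := by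
    have := tot2 (3 * q); ring_nf at this ⊢; exact this
  have t24 : Nat.totient (24 * q) = 2 * Nat.totient (12 * q) := by
    have := tot2 (6 * q); ring_nf at this ⊢; exact this
  have t18 : Nat.totient (18 * q) = 3 * Nat.totient (6 * q) := by
    have := tot3 (2 * q); ring_nf at this ⊢; exact this
  have t9 : Nat.totient (9 * q) = 3 * Nat.totient (3 * q) := by
    have := tot3 q; ring_nf at this ⊢; exact this
  have t4 : Nat.totient (4 * q) = 2 * Nat.totient (2 * q) := by
    have := tot2 q; ring_nf at this ⊢; exact this
  have t8 : Nat.totient (8 * q) = 2 * Nat.totient (4 * q) := by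
    have := tot2 (2 * q); ring_nf at this ⊢; exact this
  have : (a = 1 ∧ b = 2) ∨ (a = 1 ∧ b = 3) ∨ (a = 1 ∧ b = 4) ∨ (a = 2 ∧ b = 3) ∨
    (a = 2 ∧ b = 4) ∨ (a = 3 ∧ b = 4) := by omega
  rcases this with ⟨rfl, rfl⟩ | ⟨rfl, rfl⟩ | ⟨rfl, rfl⟩ | ⟨rfl, rfl⟩ | ⟨rfl, rfl⟩ | ⟨rfl, rfl⟩
  · exact key _ _ _ (12 * q) (6 * q) ha (by omega) (by omega) (by omega) (by omega) (by omega) hS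
  · exact key _ _ _ (9 * q) (3 * q) ha (by omega) (by omega) (by omega) (by omega) (by omega) hS
  · exact key _ _ _ (8 * q) (2 * q) ha (by omega) (by omega) (by omega) (by omega) (by omega) hS
  · exact key _ _ _ (18 * q) (12 * q) ha (by omega) (by omega) (by omega) (by omega) (by omega) hS
  · exact key _ _ _ (12 * q) (6 * q) ha (by omega) (by omega) (by omega) (by omega) (by omega) hS
  · exact key _ _ _ (24 * q) (18 * q) ha (by omega) (by omega) (by omega) (by omega) (by omega) hS


/-- Assuming the consequence of `DHL*(4;2)` (for any 4 pairwise distinct positive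
integers some pair of forms `aᵢn+1`, `aⱼn+1` is simultaneously prime infinitely
often), `φ(n) = φ(n+k)` has infinitely many solutions for every positive `k`
divisible by `6`. -/
theorem stmt_12
    (hDHL : ∀ a : Fin 4 → ℕ, (∀ i, 0 < a i) → Function.Injective a →
      ∃ i j : Fin 4, i ≠ j ∧
        {n : ℕ | 0 < n ∧ (a i * n + 1).Prime ∧ (a j * n + 1).Prime}.Infinite) :
    ∀ k : ℕ, 0 < k → 6 ∣ k →
      {n : ℕ | 0 < n ∧ Nat.totient n = Nat.totient (n + k)}.Infinite := by
  intro k hk h6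
  obtain ⟨i, j, hij, hS⟩ := hDHL (fun i => i.val + 1) (fun i => Nat.succ_pos _)
    (fun x y h => Fin.ext (Nat.succ.inj h))
  have hne : i.val ≠ j.val := fun h => hij (Fin.ext h)
  have hi := i.isLt
  have hj := j.isLt
  rcases Nat.lt_or_gt_of_ne hne with h | h
  · exact pairs (i.val + 1) (j.val + 1) k hk h6 (by omega) (by omega) (by omega) hS
  · refine pairs (j.val + 1) (i.val + 1) k hk h6 (by omega) (by omega) (by omega) ?_
    exact hS.mono fun n hn => ⟨hn.1, hn.2.2, hn.2.1⟩
end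

section
/- Let m ≥ 2 and t ≥ m. Let a₁, …, a_t be pairwise distinct positive integers satisfying aᵢ·σ(aⱼ) = aⱼ·σ(aᵢ) for all i, j (i.e. all ratios σ(aᵢ)/aᵢ are equal). Let A = lcm(a₁, …, a_t) and bᵢ = A/aᵢ. Suppose there exist indices i₁ < i₂ < ⋯ < i_m such that there are infinitely many positive integers r with b_{i₁}r − 1, …, b_{i_m}r − 1 all prime. Then there exist positive integers h₁ < h₂ < ⋯ < h_m such that for every positive integer ℓ with gcd(ℓ, A) = 1, the simultaneous equations σ(n + ℓh₁) = σ(n + ℓh₂) = ⋯ = σ(n + ℓh_m) have infinitely many solutions in positive integers n. -/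
/-- The sum-of-divisors function `σ`. -/
def sigma (n : ℕ) : ℕ := ∑ d ∈ n.divisors, d

theorem sigma_mul_aux {x y : ℕ} (h : Nat.Coprime x y) : sigma (x * y) = sigma x * sigma y := by
  have := ArithmeticFunction.isMultiplicative_sigma (k := 1) |>.map_mul_of_coprime h
  simpa [ArithmeticFunction.sigma_one_apply, sigma] using this

theorem sigma_prime_aux {p : ℕ} (h : p.Prime) : sigma p = p + 1 := by
  simp [sigma, h.sum_divisors]

/-- If `a₁,…,a_t` all have the same ratio `σ(aᵢ)/aᵢ`, `A = lcm(a₁,…,a_t)`,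
`bᵢ = A/aᵢ`, and some `m` of the forms `bᵢr - 1` are simultaneously prime for
infinitely many `r`, then there are `h₁ < ⋯ < h_m` such that for every `ℓ`
coprime to `A` the equations `σ(n+ℓh₁) = ⋯ = σ(n+ℓh_m)` have infinitely many
solutions `n`. -/
theorem stmt_13 (m t : ℕ) (hm : 2 ≤ m) (htm : m ≤ t)
    (a : Fin t → ℕ) (hapos : ∀ i, 0 < a i) (hainj : Function.Injective a)
    (hfriends : ∀ i j, a i * sigma (a j) = a j * sigma (a i))
    (A : ℕ) (hA : A = Finset.univ.lcm a)
    (b : Fin t → ℕ) (hb : ∀ i, b i = A / a i)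
    (idx : Fin m → Fin t) (hidx : StrictMono idx)
    (hprimes : {r : ℕ | 0 < r ∧ ∀ j : Fin m, (b (idx j) * r - 1).Prime}.Infinite) :
    ∃ h : Fin m → ℕ, StrictMono h ∧ (∀ j, 0 < h j) ∧
      ∀ ℓ : ℕ, 0 < ℓ → Nat.gcd ℓ A = 1 →
        {n : ℕ | 0 < n ∧ ∀ i j : Fin m,
          sigma (n + ℓ * h i) = sigma (n + ℓ * h j)}.Infinite := by
  have hdvd : ∀ i, a i ∣ A := fun i => hA ▸ Finset.dvd_lcm (Finset.mem_univ i)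
  have hApos : 0 < A := by
    rw [Nat.pos_iff_ne_zero, hA, Ne, Finset.lcm_eq_zero_iff]
    rintro ⟨i, -, hi⟩
    exact (hapos i).ne' hi
  have hle : ∀ i, a i ≤ A := fun i => Nat.le_of_dvd hApos (hdvd i)
  have hab : ∀ i, a i * b i = A := fun i => by rw [hb, Nat.mul_div_cancel' (hdvd i)]
  have hbpos : ∀ i, 0 < b i := fun i => by
    rcases Nat.eq_zero_or_pos (b i) with h | h
    · have := hab i
      rw [h] at this; omega
    · exact h
  let f : Fin m → ℕ := fun j => A + 1 - a (idx j)
  have hf : Function.Injective f := by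
    intro i j hij
    have h1 := hle (idx i)
    have h2 := hle (idx j)
    have h3 : A + 1 - a (idx i) = A + 1 - a (idx j) := hij
    exact hidx.injective (hainj (by omega))
  have hcard : (Finset.univ.image f).card = m := by
    rw [Finset.card_image_of_injective _ hf]; simp
  have hmem : ∀ i, ∃ j, f j = (Finset.univ.image f).orderEmbOfFin hcard i := fun i => by
    have := Finset.orderEmbOfFin_mem (Finset.univ.image f) hcard i
    obtain ⟨j, -, hj⟩ := Finset.mem_image.mp this
    exact ⟨j, hj⟩
  refine ⟨(Finset.univ.image f).orderEmbOfFin hcard, OrderEmbedding.strictMono _, ?_, ?_⟩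
  · intro i
    obtain ⟨j, hj⟩ := hmem i
    rw [← hj]
    have := hle (idx j)
    show 0 < A + 1 - a (idx j)
    omega
  intro ℓ hℓ hcop
  refine Set.infinite_of_forall_exists_gt fun N => ?_
  obtain ⟨r, ⟨hr0, hr⟩, hrN⟩ := hprimes.exists_gt (N + ℓ + A + 5)
  obtain ⟨s, rfl⟩ : ∃ s, r = s + 2 := ⟨r - 2, by omega⟩
  -- n = ℓ (A (s+2) - (A+1)) = ℓ (A s + (A - 1))
  have hs : s ≤ A * s := Nat.le_mul_of_pos_left s hApos
  have hs2 : A * s + (A - 1) ≤ ℓ * (A * s + (A - 1)) := Nat.le_mul_of_pos_left _ hℓ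
  have key : ∀ j, sigma (ℓ * (A * s + (A - 1)) + ℓ * f j) * a (idx j)
      = sigma ℓ * sigma (a (idx j)) * (A * (s + 2)) := by
    intro j
    have hp := hr j
    have h1 := hle (idx j)
    have hbr : s + 2 ≤ b (idx j) * (s + 2) := Nat.le_mul_of_pos_left _ (hbpos _)
    obtain ⟨p, hpe⟩ : ∃ p, b (idx j) * (s + 2) = p + 1 := ⟨b (idx j) * (s + 2) - 1, by omega⟩
    rw [hpe, Nat.add_sub_cancel] at hp
    have e0 : a (idx j) * (p + 1) = A * (s + 2) := by rw [← hpe, ← mul_assoc, hab]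
    have e1 : ℓ * (A * s + (A - 1)) + ℓ * f j = ℓ * (a (idx j) * p) := by
      rw [← mul_add]
      congr 1
      show A * s + (A - 1) + (A + 1 - a (idx j)) = _
      rw [mul_add, mul_add] at e0
      omega
    have c1 : Nat.Coprime (a (idx j)) p :=
      (Nat.coprime_of_lt_prime (hapos _).ne' (by omega) hp).symm
    have c2 : Nat.Coprime ℓ p :=
      (Nat.coprime_of_lt_prime hℓ.ne' (by omega) hp).symm
    have c3 : Nat.Coprime ℓ (a (idx j)) := Nat.Coprime.coprime_dvd_right (hdvd _) hcop
    rw [e1, sigma_mul_aux (Nat.Coprime.mul_right c3 c2), sigma_mul_aux c1, sigma_prime_aux hp, ← e0]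
    ring
  refine ⟨ℓ * (A * s + (A - 1)), ⟨by omega, ?_⟩, by omega⟩
  intro i j
  obtain ⟨i', hi⟩ := hmem i
  obtain ⟨j', hj⟩ := hmem j
  rw [← hi, ← hj]
  have k1 := key i'
  have k2 := key j'
  have k3 := hfriends (idx i') (idx j')
  have p1 := hapos (idx i')
  have p2 := hapos (idx j')
  refine Nat.eq_of_mul_eq_mul_right (Nat.mul_pos p1 p2) ?_
  rw [← mul_assoc, k1, mul_comm (a (idx i')), ← mul_assoc (sigma (ℓ * _ + ℓ * f j')), k2]
  calc _ = sigma ℓ * (A * (s + 2)) * (a (idx j') * sigma (a (idx i'))) := by ring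
    _ = _ := by rw [← k3]; ring
end

section
/- Let k be a positive integer and let p be the smallest prime that does not divide k. Then φ(p·k) = φ((p−1)·k); in particular, n = (p−1)·k is a solution of φ(n) = φ(n+k), so for every positive integer k the equation φ(n) = φ(n+k) has at least one solution. -/
theorem aux_tot (k m : ℕ) : m ≠ 0 → (∀ q : ℕ, q.Prime → q ∣ m → q ∣ k) →
    Nat.totient (m * k) = m * Nat.totient k := by
  induction m using induction_on_primes with
  | zero => intro h; exact absurd rfl h
  | one => intros; simp
  | prime_mul q a hq ih =>
    intro h0 h
    have ha : a ≠ 0 := by rintro rfl; simp at h0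
    rw [mul_assoc, Nat.totient_mul_of_prime_of_dvd hq
      (Dvd.dvd.mul_left (h q hq (dvd_mul_right q a)) a),
      ih ha (fun r hr hd => h r hr (Dvd.dvd.mul_left hd q)), mul_assoc]

theorem aux_main (k p : ℕ) (hp : p.Prime) (hpk : ¬ p ∣ k)
    (hmin : ∀ q : ℕ, q.Prime → ¬ q ∣ k → p ≤ q) :
    Nat.totient (p * k) = Nat.totient ((p - 1) * k) := by
  have h2 := hp.two_le
  rw [Nat.totient_mul_of_prime_of_not_dvd hp hpk, aux_tot k (p - 1) (by omega)]
  intro q hq hd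
  by_contra hc
  have h1 := hmin q hq hc
  have h3 := Nat.le_of_dvd (by omega) hd
  omega

theorem aux_add (k p : ℕ) (hp : p.Prime) : (p - 1) * k + k = p * k := by
  obtain ⟨m, rfl⟩ : ∃ m, p = m + 1 := ⟨p - 1, by have := hp.two_le; omega⟩
  simp [Nat.succ_mul]

/-- If `p` is the smallest prime not dividing `k`, then `φ(p·k) = φ((p-1)·k)`;
in particular `n = (p-1)·k` solves `φ(n) = φ(n+k)`, so for every positive `k`
the equation `φ(n) = φ(n+k)` has at least one solution. -/
theorem stmt_16 (k p : ℕ) (hk : 0 < k)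
    (hp : p.Prime) (hpk : ¬ p ∣ k)
    (hmin : ∀ q : ℕ, q.Prime → ¬ q ∣ k → p ≤ q) :
    Nat.totient (p * k) = Nat.totient ((p - 1) * k) ∧
      Nat.totient ((p - 1) * k) = Nat.totient ((p - 1) * k + k) ∧
      ∀ k' : ℕ, 0 < k' → ∃ n : ℕ, 0 < n ∧ Nat.totient n = Nat.totient (n + k') := by
  refine ⟨aux_main k p hp hpk hmin, ?_, ?_⟩
  · rw [aux_add k p hp, aux_main k p hp hpk hmin]
  · intro k' hk'
    have hex : ∃ q : ℕ, q.Prime ∧ ¬ q ∣ k' := by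
      obtain ⟨q, hq, hqp⟩ := Nat.exists_infinite_primes (k' + 1)
      exact ⟨q, hqp, fun hd => by have := Nat.le_of_dvd hk' hd; omega⟩
    classical
    obtain ⟨hr, hrk⟩ := Nat.find_spec hex
    refine ⟨(Nat.find hex - 1) * k', Nat.mul_pos ?_ hk', ?_⟩
    · have := hr.two_le
      omega
    · rw [aux_add k' _ hr, aux_main k' _ hr hrk]
      exact fun q hq hd => Nat.find_min' hex ⟨hq, hd⟩
end

section
/- Let k be an even positive integer and let n be a positive integer such that n+1 and 2n+1 are both prime and n+1 > k. Then φ(k·(2n+1)) = φ(2k·(n+1)). In particular, if there are infinitely many n with n+1 and 2n+1 both prime, then for every even k the equation φ(n) = φ(n+k) has infinitely many solutions. -/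
theorem aux_17 (k n : ℕ) (hk : 0 < k) (hkeven : Even k)
    (hp : (n + 1).Prime) (hq : (2 * n + 1).Prime) (hnk : k < n + 1) :
    Nat.totient (k * (2 * n + 1)) = Nat.totient (2 * k * (n + 1)) := by
  have h2 : 2 ∣ k := hkeven.two_dvd
  have hk2 : 2 ≤ k := Nat.le_of_dvd hk h2
  have c1 : Nat.Coprime k (2 * n + 1) :=
    (Nat.coprime_of_lt_prime hk.ne' (by omega) hq).symm
  have c2 : Nat.Coprime k (n + 1) := (Nat.coprime_of_lt_prime hk.ne' hnk hp).symm
  have c3 : Nat.Coprime 2 (n + 1) := (Nat.coprime_of_lt_prime (by norm_num) (by omega) hp).symm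
  rw [Nat.totient_mul c1, Nat.totient_mul (Nat.Coprime.mul_left c3 c2),
    Nat.totient_mul_of_prime_of_dvd Nat.prime_two h2, Nat.totient_prime hp, Nat.totient_prime hq]
  simp only [Nat.add_sub_cancel]
  ring

/-- If `k` is even, `n+1` and `2n+1` are prime and `n+1 > k`, then
`φ(k(2n+1)) = φ(2k(n+1))`.  In particular, if there are infinitely many `n` with
`n+1` and `2n+1` both prime, then for every even positive `k` the equation
`φ(n) = φ(n+k)` has infinitely many solutions. -/
theorem stmt_17 (k n : ℕ) (hk : 0 < k) (hkeven : Even k) (hn : 0 < n)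
    (hp : (n + 1).Prime) (hq : (2 * n + 1).Prime) (hnk : k < n + 1) :
    Nat.totient (k * (2 * n + 1)) = Nat.totient (2 * k * (n + 1)) ∧
      ({n : ℕ | 0 < n ∧ (n + 1).Prime ∧ (2 * n + 1).Prime}.Infinite →
        ∀ k' : ℕ, 0 < k' → Even k' →
          {m : ℕ | 0 < m ∧ Nat.totient m = Nat.totient (m + k')}.Infinite) := by
  refine ⟨aux_17 k n hk hkeven hp hq hnk, ?_⟩
  intro hinf k' hk' he
  rw [Set.infinite_iff_exists_gt]
  intro a
  obtain ⟨b, ⟨_, hb1, hb2⟩, hab⟩ := hinf.exists_gt (a + k')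
  refine ⟨k' * (2 * b + 1), ⟨by positivity, ?_⟩, by nlinarith⟩
  rw [aux_17 k' b hk' he hb1 hb2 (by omega)]
  congr 1
  ring
end

section
/- Let m be a positive integer with σ(m)·(m+1) = σ(m+1)·m, and let r > m+1 be a positive integer such that rm − 1 and r(m+1) − 1 are both prime. Then σ(m·(r(m+1) − 1)) = σ((m+1)·(rm − 1)); note that the two arguments differ by exactly 1, so this produces a solution of σ(n) = σ(n+1). -/
theorem sigma_mul_prime_aux (a p : ℕ) (ha : 0 < a) (hp : p.Prime) (h : a < p) :
    sigma (a * p) = sigma a * (p + 1) := by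
  have hc : Nat.Coprime a p := (Nat.coprime_of_lt_prime ha.ne' h hp).symm
  have e : ∀ n, sigma n = ArithmeticFunction.sigma 1 n := by
    intro n
    rw [ArithmeticFunction.sigma_one_apply]
    rfl
  rw [e, e, ArithmeticFunction.isMultiplicative_sigma.map_mul_of_coprime hc]
  congr 1
  rw [ArithmeticFunction.sigma_one_apply, hp.sum_divisors]

/-- If `σ(m)/m = σ(m+1)/(m+1)` and `r > m+1` with `rm - 1` and `r(m+1) - 1` both
prime, then `σ(m(r(m+1) - 1)) = σ((m+1)(rm - 1))`; the two arguments differ by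
exactly `1`, giving a solution of `σ(n) = σ(n+1)`. -/
theorem stmt_18 (m r : ℕ) (hm : 0 < m)
    (hfriend : sigma m * (m + 1) = sigma (m + 1) * m)
    (hr : m + 1 < r)
    (hp : (r * m - 1).Prime) (hq : (r * (m + 1) - 1).Prime) :
    sigma (m * (r * (m + 1) - 1)) = sigma ((m + 1) * (r * m - 1)) ∧
      m * (r * (m + 1) - 1) = (m + 1) * (r * m - 1) + 1 := by
  have h1 : m ≠ 1 := by
    rintro rfl
    revert hfriend
    decide
  have h2 : 2 ≤ m := by omega
  obtain ⟨p, hpe⟩ : ∃ p, p = r * m - 1 := ⟨_, rfl⟩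
  obtain ⟨q, hqe⟩ : ∃ q, q = r * (m + 1) - 1 := ⟨_, rfl⟩
  rw [← hpe] at hp
  rw [← hqe] at hq
  rw [← hpe, ← hqe]
  have hp1 : p + 1 = r * m := by have := hp.pos; omega
  have hq1 : q + 1 = r * (m + 1) := by have := hq.pos; omega
  have hpm : m + 1 < p := by nlinarith
  have hqm : m < q := by nlinarith
  refine ⟨?_, ?_⟩
  · rw [sigma_mul_prime_aux m q hm hq hqm, sigma_mul_prime_aux (m + 1) p (by omega) hp hpm,
      hp1, hq1]
    linear_combination r * hfriend
  · zify at *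
    linear_combination (m : ℤ) * hq1 - (m + 1) * hp1
end
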